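/- Let A = L_n(ℓ_1) L_{n−1}(ℓ_2) ⋯ L_2(ℓ_{n−1}) D U_2(u_{n−1}) ⋯ U_{n−1}(u_2) U_n(u_1), where all ℓ_i, u_i > 0 and D is a positive diagonal matrix. Then A is oscillatory with exponent r(A) = n−1. -/

import Mathlib

/-- A square real matrix is totally nonnegative if all its minors are nonnegative. -/
def TotallyNonneg {n : ℕ} (A : Matrix (Fin n) (Fin n) ℝ) : Prop :=
  ∀ (k : ℕ) (r c : Fin k → Fin n), StrictMono r → StrictMono c →
    0 ≤ (A.submatrix r c).det

/-- A square real matrix is totally positive if all its minors are positive. -/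
def TotallyPos {n : ℕ} (A : Matrix (Fin n) (Fin n) ℝ) : Prop :=
  ∀ (k : ℕ) (r c : Fin k → Fin n), StrictMono r → StrictMono c →
    0 < (A.submatrix r c).det

/-- The lower elementary bidiagonal matrix L_i(q) = I + q·E_{i,i−1} (1-indexed i). -/
def Lmat (n i : ℕ) (q : ℝ) : Matrix (Fin n) (Fin n) ℝ :=
  1 + Matrix.of fun a b : Fin n => if a.val + 1 = i ∧ b.val + 2 = i then q else 0

/-- The upper elementary bidiagonal matrix U_i(q) = I + q·E_{i−1,i} (1-indexed i). -/
def Umat (n i : ℕ) (q : ℝ) : Matrix (Fin n) (Fin n) ℝ :=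
  1 + Matrix.of fun a b : Fin n => if a.val + 2 = i ∧ b.val + 1 = i then q else 0

open Matrix in
lemma cb_aux {k n : ℕ} (M : Matrix (Fin k) (Fin n) ℝ) (N : Matrix (Fin n) (Fin k) ℝ) :
    (M * N).det = ∑ g : Fin k → Fin n, (∏ i, N (g i) i) * (M.submatrix id g).det := by
  simp only [det_apply', mul_apply, Finset.prod_univ_sum, Finset.mul_sum, Fintype.piFinset_univ]
  rw [Finset.sum_comm]
  refine Finset.sum_congr rfl fun g _ => Finset.sum_congr rfl fun σ _ => ?_
  simp only [submatrix_apply, id, Finset.prod_mul_distrib]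
  ring

open Matrix in
/-- A symmetrised Cauchy–Binet formula. -/
lemma cb {k n : ℕ} (M : Matrix (Fin k) (Fin n) ℝ) (N : Matrix (Fin n) (Fin k) ℝ) :
    (k.factorial : ℝ) * (M * N).det =
      ∑ f : Fin k → Fin n, (M.submatrix id f).det * (N.submatrix f id).det := by
  have h1 : ∀ f : Fin k → Fin n, (M.submatrix id f).det * (N.submatrix f id).det =
      ∑ σ : Equiv.Perm (Fin k), (∏ i, N (f (σ i)) i) * (M.submatrix id (f ∘ σ)).det := by
    intro f
    rw [det_apply' (N.submatrix f id), Finset.mul_sum]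
    refine Finset.sum_congr rfl fun σ _ => ?_
    have : M.submatrix id (f ∘ σ) = (M.submatrix id f).submatrix id σ := rfl
    rw [this, det_permute']
    simp only [submatrix_apply, id]
    ring
  simp_rw [h1]
  rw [Finset.sum_comm]
  have h2 : ∀ σ : Equiv.Perm (Fin k), ∑ f : Fin k → Fin n,
      (∏ i, N (f (σ i)) i) * (M.submatrix id (f ∘ σ)).det = (M * N).det := by
    intro σ
    rw [cb_aux]
    exact Fintype.sum_equiv (Equiv.arrowCongr σ.symm (Equiv.refl _)) _ _ (fun f => by
      simp [Equiv.arrowCongr, Function.comp_def])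
  simp_rw [h2]
  simp [Fintype.card_perm]

lemma term_nonneg {k n : ℕ} {A B : Matrix (Fin n) (Fin n) ℝ} (hA : TotallyNonneg A)
    (hB : TotallyNonneg B) {r c : Fin k → Fin n} (hr : StrictMono r) (hc : StrictMono c)
    (f : Fin k → Fin n) : 0 ≤ (A.submatrix r f).det * (B.submatrix f c).det := by
  by_cases hf : Function.Injective f
  · set σ := Tuple.sort f
    have hs : StrictMono (f ∘ σ) :=
      (Tuple.monotone_sort f).strictMono_of_injective (hf.comp σ.injective)
    have h1 := hA k r _ hr hs
    have h2 := hB k _ c hs hc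
    have e1 : A.submatrix r (f ∘ σ) = (A.submatrix r f).submatrix id σ := rfl
    have e2 : B.submatrix (f ∘ σ) c = (B.submatrix f c).submatrix σ id := rfl
    rw [e1, Matrix.det_permute'] at h1
    rw [e2, Matrix.det_permute] at h2
    have h3 := mul_nonneg h1 h2
    rcases Int.units_eq_one_or (Equiv.Perm.sign σ) with h | h <;> rw [h] at h3 <;> simpa using h3
  · simp only [Function.Injective, not_forall] at hf
    obtain ⟨i, j, hij, hne⟩ := hf
    rw [Matrix.det_zero_of_column_eq (M := A.submatrix r f) hne (by simp [hij])]
    simp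

lemma submx_mul {k n : ℕ} (A B : Matrix (Fin n) (Fin n) ℝ) (r c : Fin k → Fin n) :
    (A * B).submatrix r c = A.submatrix r id * B.submatrix id c := by
  ext i j; simp [Matrix.mul_apply]

lemma tn_mul {n : ℕ} {A B : Matrix (Fin n) (Fin n) ℝ} (hA : TotallyNonneg A)
    (hB : TotallyNonneg B) : TotallyNonneg (A * B) := by
  intro k r c hr hc
  have h := cb (A.submatrix r id) (B.submatrix id c)
  rw [← submx_mul] at h
  have h2 : 0 ≤ (k.factorial : ℝ) * ((A * B).submatrix r c).det := by
    rw [h]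
    exact Finset.sum_nonneg fun f _ => by simpa using term_nonneg hA hB hr hc f
  exact nonneg_of_mul_nonneg_right h2 (by positivity)

lemma pos_mul {k n : ℕ} {A B : Matrix (Fin n) (Fin n) ℝ} (hA : TotallyNonneg A)
    (hB : TotallyNonneg B) {r s c : Fin k → Fin n} (hr : StrictMono r) (hc : StrictMono c)
    (h1 : 0 < (A.submatrix r s).det) (h2 : 0 < (B.submatrix s c).det) :
    0 < ((A * B).submatrix r c).det := by
  have h := cb (A.submatrix r id) (B.submatrix id c)
  rw [← submx_mul] at h
  have h2 : 0 < (k.factorial : ℝ) * ((A * B).submatrix r c).det := by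
    rw [h]
    exact Finset.sum_pos' (fun f _ => by simpa using term_nonneg hA hB hr hc f)
      ⟨s, Finset.mem_univ _, by simpa using mul_pos h1 h2⟩
  exact pos_of_mul_pos_right h2 (by positivity)

/-- A nonnegative lower bidiagonal matrix is totally nonnegative. -/
lemma tn_bidiag {n : ℕ} {A : Matrix (Fin n) (Fin n) ℝ} (h0 : ∀ a b, 0 ≤ A a b)
    (h1 : ∀ a b : Fin n, A a b ≠ 0 → b.val ≤ a.val ∧ a.val ≤ b.val + 1) : TotallyNonneg A := by
  intro k r c hr hc
  have : (A.submatrix r c).det = ∏ i, A (r i) (c i) := by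
    rw [Matrix.det_apply', Finset.sum_eq_single 1]
    · simp
    · intro σ _ hσ
      by_contra hne
      have hp : ∀ i, A (r (σ i)) (c i) ≠ 0 := by
        intro i hi
        exact hne (by rw [Finset.prod_eq_zero (Finset.mem_univ i) (by simpa using hi), mul_zero])
      apply hσ
      have hm : StrictMono σ := by
        intro p q hpq
        by_contra hlt
        have hlt2 : σ q < σ p := lt_of_le_of_ne (not_lt.1 hlt)
          (fun e => hpq.ne' (σ.injective e))
        have a1 : (r (σ q)).val < (r (σ p)).val := hr hlt2
        have a2 : (c p).val < (c q).val := hc hpq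
        have a3 := h1 _ _ (hp p)
        have a4 := h1 _ _ (hp q)
        omega
      ext i
      have := congrFun ((StrictMono.range_inj hm strictMono_id).1
        (by simp [σ.surjective.range_eq])) i
      simp [this]
    · simp
  rw [this]
  exact Finset.prod_nonneg fun i _ => h0 _ _

lemma tn_transpose {n : ℕ} {A : Matrix (Fin n) (Fin n) ℝ} (h : TotallyNonneg A) :
    TotallyNonneg A.transpose := by
  intro k r c hr hc
  have := h k c r hc hr
  rwa [← Matrix.det_transpose] at this

lemma tn_diag {n : ℕ} {d : Fin n → ℝ} (hd : ∀ i, 0 < d i) : TotallyNonneg (Matrix.diagonal d) := by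
  apply tn_bidiag
  · intro a b
    rw [Matrix.diagonal_apply]; split_ifs
    · exact (hd a).le
    · exact le_rfl
  · intro a b h
    rw [Matrix.diagonal_apply] at h
    split_ifs at h with hh
    · subst hh; omega
    · exact absurd rfl h

lemma tn_Lmat {n i : ℕ} {q : ℝ} (hq : 0 < q) : TotallyNonneg (Lmat n i q) := by
  apply tn_bidiag
  · intro a b
    simp only [Lmat, Matrix.add_apply, Matrix.one_apply, Matrix.of_apply]
    split_ifs <;> positivity
  · intro a b h
    simp only [Lmat, Matrix.add_apply, Matrix.one_apply, Matrix.of_apply] at h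
    split_ifs at h with h1 h2 h2
    · subst h1; omega
    · subst h1; omega
    · omega
    · simp at h

lemma tn_one {n : ℕ} : TotallyNonneg (1 : Matrix (Fin n) (Fin n) ℝ) := by
  rw [← Matrix.diagonal_one]; exact tn_diag (fun _ => one_pos)

lemma tn_list {n : ℕ} (l : List (Matrix (Fin n) (Fin n) ℝ)) (h : ∀ x ∈ l, TotallyNonneg x) :
    TotallyNonneg l.prod := by
  induction l with
  | nil => exact tn_one
  | cons a l ih =>
    rw [List.prod_cons]
    exact tn_mul (h a (by simp)) (ih fun x hx => h x (by simp [hx]))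

lemma tn_pow {n : ℕ} {A : Matrix (Fin n) (Fin n) ℝ} (hA : TotallyNonneg A) (t : ℕ) :
    TotallyNonneg (A ^ t) := by
  induction t with
  | zero => rw [pow_zero]; exact tn_one
  | succ t ih => rw [pow_succ]; exact tn_mul ih hA

def LL (n : ℕ) (ℓ : Fin (n - 1) → ℝ) : Matrix (Fin n) (Fin n) ℝ :=
  (List.ofFn fun j : Fin (n - 1) => Lmat n (n - j.val) (ℓ j)).prod

lemma list_absorb {R : Type*} [Ring R] (x : R) (m : ℕ) (E : Fin m → R) (h : ∀ i, x * E i = 0) :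
    x * (List.ofFn fun i => 1 + E i).prod = x := by
  induction m with
  | zero => simp
  | succ m ih =>
    rw [List.ofFn_succ, List.prod_cons, ← mul_assoc, mul_add, h, mul_one, add_zero]
    exact ih (fun i => E i.succ) (fun i => h _)

lemma list_inv {R : Type*} [Ring R] (m : ℕ) (E : Fin m → R)
    (h : ∀ i j, i ≤ j → E j * E i = 0) :
    (1 - ∑ i, E i) * (List.ofFn fun i => 1 + E i).prod = 1 := by
  induction m with
  | zero => simp
  | succ m ih =>
    have h1 := ih (fun i => E i.castSucc) (fun i j hij => h _ _ (by simpa using hij))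
    have h2 := list_absorb (E (Fin.last m)) m (fun i => E i.castSucc)
      (fun i => h _ _ (Fin.le_last _))
    rw [List.ofFn_succ', List.concat_eq_append, List.prod_append, List.prod_singleton,
      Fin.sum_univ_castSucc, ← mul_assoc, ← sub_sub, sub_mul _ (E (Fin.last m)), h1, h2,
      mul_add, sub_mul 1 (E (Fin.last m)) (E (Fin.last m)), h _ _ le_rfl]
    simp

/-- The strictly lower bidiagonal part. -/
lemma LL_inv {n : ℕ} (ℓ : Fin (n - 1) → ℝ) (hℓ : ∀ j, 0 < ℓ j) :
    ∃ N : Matrix (Fin n) (Fin n) ℝ, (1 - N) * LL n ℓ = 1 ∧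
      (∀ a b : Fin n, a.val ≠ b.val + 1 → N a b = 0) ∧
      (∀ a b : Fin n, a.val = b.val + 1 → 0 < N a b) := by
  set E : Fin (n - 1) → Matrix (Fin n) (Fin n) ℝ := fun j =>
    Matrix.of fun a b : Fin n => if a.val + 1 = n - j.val ∧ b.val + 2 = n - j.val then ℓ j else 0
    with hE
  refine ⟨∑ j, E j, list_inv (n - 1) E ?_, ?_, ?_⟩
  · intro i j hij
    have hij' : i.val ≤ j.val := hij
    ext a b
    rw [Matrix.mul_apply, Matrix.zero_apply]
    refine Finset.sum_eq_zero fun c _ => ?_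
    simp only [hE, Matrix.of_apply]
    split_ifs <;> first | omega | simp
  · intro a b hab
    rw [Matrix.sum_apply]
    refine Finset.sum_eq_zero fun c _ => ?_
    simp only [hE, Matrix.of_apply]
    split_ifs
    · omega
    · rfl
  · intro a b hab
    rw [Matrix.sum_apply]
    refine Finset.sum_pos' (fun c _ => ?_) ⟨⟨n - 1 - a.val, by omega⟩, Finset.mem_univ _, ?_⟩
    · simp only [hE, Matrix.of_apply]
      split_ifs
      · exact (hℓ _).le
      · exact le_rfl
    · simp only [hE, Matrix.of_apply]
      rw [if_pos (by omega)]
      exact hℓ _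

lemma LL_entry {n : ℕ} (ℓ : Fin (n - 1) → ℝ) (hℓ : ∀ j, 0 < ℓ j) (b : Fin n) (m : ℕ) :
    ∀ (hm : m < n), (b.val ≤ m → 0 < LL n ℓ ⟨m, hm⟩ b) ∧ (m < b.val → LL n ℓ ⟨m, hm⟩ b = 0) := by
  obtain ⟨N, h1, h2, h3⟩ := LL_inv ℓ hℓ
  have hrec : LL n ℓ = 1 + N * LL n ℓ := by
    rw [sub_mul, one_mul] at h1
    rw [← h1]; abel_nf
  induction m with
  | zero =>
    intro hm
    have : LL n ℓ ⟨0, hm⟩ b = (1 : Matrix (Fin n) (Fin n) ℝ) ⟨0, hm⟩ b := by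
      conv_lhs => rw [hrec]
      rw [Matrix.add_apply, Matrix.mul_apply, Finset.sum_eq_zero, add_zero]
      intro c _
      rw [h2 _ _ (by simp), zero_mul]
    rw [this, Matrix.one_apply]
    constructor
    · intro hb
      rw [if_pos (Fin.ext (by simp; omega))]; exact one_pos
    · intro hb
      rw [if_neg (fun e => by simp [← e] at hb)]
  | succ m ih =>
    intro hm
    have hm' : m < n := by omega
    have : LL n ℓ ⟨m + 1, hm⟩ b = (1 : Matrix (Fin n) (Fin n) ℝ) ⟨m + 1, hm⟩ b +
        N ⟨m + 1, hm⟩ ⟨m, hm'⟩ * LL n ℓ ⟨m, hm'⟩ b := by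
      conv_lhs => rw [hrec]
      rw [Matrix.add_apply, Matrix.mul_apply, Finset.sum_eq_single ⟨m, hm'⟩]
      · intro c _ hc
        rw [h2 _ _ (fun e => hc (Fin.ext (by simp at e; simp [e]))), zero_mul]
      · simp
    rw [this, Matrix.one_apply]
    have hN := h3 ⟨m + 1, hm⟩ ⟨m, hm'⟩ rfl
    obtain ⟨i1, i2⟩ := ih hm'
    constructor
    · intro hb
      by_cases hbm : b.val ≤ m
      · have := mul_pos hN (i1 hbm)
        split_ifs <;> linarith
      · rw [i2 (by omega), if_pos (Fin.ext (by simp; omega))]; simp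
    · intro hb
      rw [i2 (by omega), if_neg (fun e => by simp [← e] at hb)]; simp

lemma tn_LL {n : ℕ} (ℓ : Fin (n - 1) → ℝ) (hℓ : ∀ j, 0 < ℓ j) : TotallyNonneg (LL n ℓ) := by
  apply tn_list
  intro x hx
  obtain ⟨j, rfl⟩ := (List.mem_ofFn' _ _).1 hx
  exact tn_Lmat (hℓ j)

lemma LL_pos {n k : ℕ} (ℓ : Fin (n - 1) → ℝ) (hℓ : ∀ j, 0 < ℓ j) (r c : Fin k → Fin n)
    (h1 : ∀ p, c p ≤ r p) (h2 : ∀ p q, p < q → r p < c q) :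
    0 < ((LL n ℓ).submatrix r c).det := by
  rw [Matrix.det_of_isLowerTriangular]
  · exact Finset.prod_pos fun i _ => (LL_entry ℓ hℓ (c i) (r i) (r i).2).1 (h1 i)
  · intro i j hij
    exact (LL_entry ℓ hℓ (c j) (r i) (r i).2).2 (h2 i j (by simpa using hij))

lemma Umat_transpose (n i : ℕ) (q : ℝ) : (Umat n i q).transpose = Lmat n i q := by
  ext a b
  simp [Umat, Lmat, Matrix.one_apply, and_comm, eq_comm]

lemma U_eq {n : ℕ} (u : Fin (n - 1) → ℝ) :
    (List.ofFn fun j : Fin (n - 1) => Umat n (j.val + 2) (u j)).prod =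
      (LL n (fun j => u j.rev)).transpose := by
  apply Matrix.transpose_injective
  rw [Matrix.transpose_transpose, Matrix.transpose_list_prod, List.map_ofFn, LL]
  congr 1
  apply List.ext_getElem
  · simp
  · intro i h1 h2
    have hi : i < n - 1 := by simpa using h2
    simp only [List.getElem_reverse, List.getElem_ofFn, Function.comp, Umat_transpose,
      List.length_ofFn]
    have e : n - 1 - 1 - i + 2 = n - i := by omega
    rw [e]
    congr 2
    ext
    simp [Fin.val_rev]; omega

lemma step {n k : ℕ} {ℓ v : Fin (n - 1) → ℝ} {dd : Fin n → ℝ}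
    (hℓ : ∀ j, 0 < ℓ j) (hv : ∀ j, 0 < v j) (hdd : ∀ i, 0 < dd i)
    (t : ℕ) (I J : Fin k → Fin n) (hI : StrictMono I) (hJ : StrictMono J)
    (h1 : ∀ p : Fin k, p.val < t → I p ≤ J p) (h2 : ∀ p : Fin k, k ≤ p.val + t → J p ≤ I p) :
    ∃ I' : Fin k → Fin n, StrictMono I' ∧
      0 < ((LL n ℓ * Matrix.diagonal dd * (LL n v).transpose).submatrix I I').det ∧
      (∀ p : Fin k, p.val < t + 1 → I' p ≤ J p) ∧
      (∀ p : Fin k, k ≤ p.val + (t + 1) → J p ≤ I' p) := by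
  set K : Fin k → Fin n := fun p => if p.val ≤ t then min (I p) (J p) else I p with hK
  have a1 : ∀ p, K p ≤ I p := by
    intro p; simp only [hK]; split_ifs
    · exact min_le_left _ _
    · exact le_rfl
  have a2 : ∀ p q, p < q → I p < K q := by
    intro p q hpq
    simp only [hK]; split_ifs with h
    · exact lt_min (hI hpq) ((h1 p (lt_of_lt_of_le hpq h)).trans_lt (hJ hpq))
    · exact hI hpq
  have hKm : StrictMono K := fun p q hpq => (a1 p).trans_lt (a2 p q hpq)
  have a3 : ∀ p : Fin k, k ≤ p.val + t → J p ≤ K p := by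
    intro p hp; simp only [hK]; split_ifs
    · exact le_min (h2 p hp) le_rfl
    · exact h2 p hp
  have a4 : ∀ p : Fin k, p.val < t + 1 → K p ≤ J p := by
    intro p hp; simp only [hK]; rw [if_pos (by omega)]; exact min_le_right _ _
  set M : Fin k → Fin n := fun p => if k ≤ p.val + (t + 1) then max (K p) (J p) else K p with hM
  have b1 : ∀ p, K p ≤ M p := by
    intro p; simp only [hM]; split_ifs
    · exact le_max_left _ _
    · exact le_rfl
  have b2 : ∀ p q, p < q → M p < K q := by
    intro p q hpq
    have hpq' : p.val < q.val := hpq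
    simp only [hM]; split_ifs with h
    · exact max_lt (hKm hpq) ((hJ hpq).trans_le (a3 q (by omega)))
    · exact hKm hpq
  have hMm : StrictMono M := fun p q hpq => (b2 p q hpq).trans_le (b1 q)
  refine ⟨M, hMm, ?_, ?_, ?_⟩
  · refine pos_mul (tn_mul (tn_LL ℓ hℓ) (tn_diag hdd)) (tn_transpose (tn_LL v hv)) hI hMm
      (s := K) (pos_mul (tn_LL ℓ hℓ) (tn_diag hdd) hI hKm (s := K) (LL_pos ℓ hℓ I K a1 a2) ?_) ?_
    · have : (Matrix.diagonal dd).submatrix K K = Matrix.diagonal (dd ∘ K) :=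
        Matrix.submatrix_diagonal _ _ hKm.injective
      rw [this, Matrix.det_diagonal]
      exact Finset.prod_pos fun i _ => hdd _
    · rw [← Matrix.det_transpose]
      exact LL_pos v hv M K b1 b2
  · intro p hp
    simp only [hM]; split_ifs
    · exact max_le (a4 p hp) le_rfl
    · exact a4 p hp
  · intro p hp
    simp only [hM]; rw [if_pos hp]; exact le_max_right _ _

lemma reach {n k : ℕ} {ℓ v : Fin (n - 1) → ℝ} {dd : Fin n → ℝ}
    (hℓ : ∀ j, 0 < ℓ j) (hv : ∀ j, 0 < v j) (hdd : ∀ i, 0 < dd i)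
    (s t : ℕ) (I J : Fin k → Fin n) (hI : StrictMono I) (hJ : StrictMono J)
    (h1 : ∀ p : Fin k, p.val < s → I p ≤ J p) (h2 : ∀ p : Fin k, k ≤ p.val + s → J p ≤ I p) :
    ∃ I' : Fin k → Fin n, StrictMono I' ∧
      0 < (((LL n ℓ * Matrix.diagonal dd * (LL n v).transpose) ^ t).submatrix I I').det ∧
      (∀ p : Fin k, p.val < s + t → I' p ≤ J p) ∧
      (∀ p : Fin k, k ≤ p.val + (s + t) → J p ≤ I' p) := by
  have hTN := tn_mul (tn_mul (tn_LL ℓ hℓ) (tn_diag hdd)) (tn_transpose (tn_LL v hv))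
  induction t with
  | zero =>
    refine ⟨I, hI, ?_, h1, h2⟩
    rw [pow_zero, Matrix.submatrix_one _ hI.injective, Matrix.det_one]
    exact one_pos
  | succ t ih =>
    obtain ⟨K, k1, k2, k3, k4⟩ := ih
    obtain ⟨M, m1, m2, m3, m4⟩ := step hℓ hv hdd (s + t) K J k1 hJ k3 k4
    refine ⟨M, m1, ?_, m3, m4⟩
    rw [pow_succ]
    exact pos_mul (tn_pow hTN t) hTN hI m1 k2 m2

lemma tp_pow {n : ℕ} {ℓ v : Fin (n - 1) → ℝ} {dd : Fin n → ℝ}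
    (hℓ : ∀ j, 0 < ℓ j) (hv : ∀ j, 0 < v j) (hdd : ∀ i, 0 < dd i) :
    TotallyPos ((LL n ℓ * Matrix.diagonal dd * (LL n v).transpose) ^ (n - 1)) := by
  intro k r c hr hc
  have hk : k ≤ n := by simpa using Fintype.card_le_of_injective r hr.injective
  obtain ⟨s, hs, h1, h2⟩ : ∃ s, k ≤ s + (n - 1) ∧ (∀ p : Fin k, p.val < s → r p ≤ c p) ∧
      (∀ p : Fin k, k ≤ p.val + s → c p ≤ r p) := by
    by_cases h : k = n
    · subst h
      have e : ∀ f : Fin k → Fin k, StrictMono f → f = id := fun f hf =>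
        (StrictMono.range_inj hf strictMono_id).1
          (by simp [(Finite.injective_iff_surjective.1 hf.injective).range_eq])
      rw [e r hr, e c hc]
      exact ⟨k, by omega, fun _ _ => le_rfl, fun _ _ => le_rfl⟩
    · exact ⟨0, by omega, fun p hp => by omega, fun p hp => by omega⟩
  obtain ⟨K, k1, k2, k3, k4⟩ := reach hℓ hv hdd s (n - 1) r c hr hc h1 h2
  have : K = c := funext fun p => le_antisymm (k3 p (by omega)) (k4 p (by omega))
  rwa [this] at k2

lemma band_mul {n : ℕ} {w₁ w₂ : ℕ} {X Y : Matrix (Fin n) (Fin n) ℝ}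
    (hX : ∀ i j : Fin n, j.val + w₁ < i.val → X i j = 0)
    (hY : ∀ i j : Fin n, j.val + w₂ < i.val → Y i j = 0) :
    ∀ i j : Fin n, j.val + (w₁ + w₂) < i.val → (X * Y) i j = 0 := by
  intro i j h
  rw [Matrix.mul_apply]
  refine Finset.sum_eq_zero fun c _ => ?_
  by_cases hc : c.val + w₁ < i.val
  · rw [hX _ _ hc, zero_mul]
  · rw [hY _ _ (by omega), mul_zero]

lemma band_pow {n : ℕ} {X : Matrix (Fin n) (Fin n) ℝ}
    (hX : ∀ i j : Fin n, j.val + 1 < i.val → X i j = 0) (r : ℕ) :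
    ∀ i j : Fin n, j.val + r < i.val → (X ^ r) i j = 0 := by
  induction r with
  | zero =>
    intro i j h
    rw [pow_zero, Matrix.one_apply_ne]
    intro e; subst e; omega
  | succ r ih => rw [pow_succ]; exact band_mul ih hX

lemma exists_inv {n : ℕ} {ℓ v : Fin (n - 1) → ℝ} {dd : Fin n → ℝ}
    (hℓ : ∀ j, 0 < ℓ j) (hv : ∀ j, 0 < v j) (hdd : ∀ i, 0 < dd i) :
    ∃ B : Matrix (Fin n) (Fin n) ℝ,
      B * (LL n ℓ * Matrix.diagonal dd * (LL n v).transpose) = 1 ∧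
      ∀ i j : Fin n, j.val + 1 < i.val → B i j = 0 := by
  obtain ⟨N, n1, n2, -⟩ := LL_inv ℓ hℓ
  obtain ⟨P, p1, p2, -⟩ := LL_inv v hv
  refine ⟨(1 - P).transpose * Matrix.diagonal (fun i => (dd i)⁻¹) * (1 - N), ?_, ?_⟩
  · have e1 : (1 - P).transpose * (LL n v).transpose = 1 := by
      rw [← Matrix.transpose_mul, mul_eq_one_comm.1 p1, Matrix.transpose_one]
    have e2 : Matrix.diagonal (fun i => (dd i)⁻¹) * Matrix.diagonal dd = 1 := by
      rw [Matrix.diagonal_mul_diagonal, ← Matrix.diagonal_one]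
      congr 1; ext i; exact inv_mul_cancel₀ (hdd i).ne'
    calc _ = (1 - P).transpose * (Matrix.diagonal (fun i => (dd i)⁻¹) * (((1 - N) * LL n ℓ) *
          Matrix.diagonal dd)) * (LL n v).transpose := by simp only [mul_assoc]
      _ = 1 := by rw [n1, one_mul, e2, mul_one, e1]
  · have f1 : ∀ i j : Fin n, j.val + 0 < i.val → (1 - P).transpose i j = 0 := by
      intro i j h
      rw [Matrix.transpose_apply, Matrix.sub_apply, p2 _ _ (by omega),
        Matrix.one_apply_ne (by intro e; subst e; omega), sub_zero]
    have f2 : ∀ i j : Fin n, j.val + 0 < i.val →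
        Matrix.diagonal (fun i => (dd i)⁻¹) i j = 0 := by
      intro i j h
      rw [Matrix.diagonal_apply_ne]; intro e; subst e; omega
    have f3 : ∀ i j : Fin n, j.val + 1 < i.val → (1 - N) i j = 0 := by
      intro i j h
      rw [Matrix.sub_apply, n2 _ _ (by omega),
        Matrix.one_apply_ne (by intro e; subst e; omega), sub_zero]
    have := band_mul (band_mul f1 f2) f3
    simpa using this

lemma not_tp {n : ℕ} (hn : 2 ≤ n) {A B : Matrix (Fin n) (Fin n) ℝ} (hBA : B * A = 1)
    (hB : ∀ i j : Fin n, j.val + 1 < i.val → B i j = 0) (r : ℕ) (hr : TotallyPos (A ^ r)) :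
    n - 1 ≤ r := by
  obtain ⟨m, rfl⟩ : ∃ m, n = m + 1 := ⟨n - 1, by omega⟩
  by_contra hlt
  have h0 := band_pow hB r (Fin.last m) 0 (by simp; omega)
  have hc : Commute B A := by
    show B * A = A * B
    rw [hBA, mul_eq_one_comm.1 hBA]
  have h1 : B ^ r * A ^ r = 1 := by rw [← hc.mul_pow, hBA, one_pow]
  have h2 : (A ^ r).adjugate = (A ^ r).det • B ^ r := by
    calc (A ^ r).adjugate = B ^ r * A ^ r * (A ^ r).adjugate := by rw [h1, one_mul]
      _ = _ := by rw [mul_assoc, Matrix.mul_adjugate, Matrix.mul_smul, mul_one]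
  have h3 := Matrix.adjugate_fin_succ_eq_det_submatrix (A ^ r) (Fin.last m) 0
  rw [h2, Matrix.smul_apply, h0, smul_zero] at h3
  have h4 := hr m _ _ (Fin.strictMono_succAbove 0) (Fin.strictMono_succAbove (Fin.last m))
  rcases mul_eq_zero.1 h3.symm with h | h
  · exact absurd h (pow_ne_zero _ (by norm_num))
  · exact h4.ne' h

/-- A = L_n(ℓ_1)L_{n−1}(ℓ_2)⋯L_2(ℓ_{n−1}) · D · U_2(u_{n−1})⋯U_{n−1}(u_2)U_n(u_1),
with all multipliers positive and D a positive diagonal matrix, is oscillatory with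
exponent n−1. -/
theorem stmt17 {n : ℕ} (hn : 2 ≤ n) (ℓ u : Fin (n - 1) → ℝ) (dd : Fin n → ℝ)
    (hℓ : ∀ j, 0 < ℓ j) (hu : ∀ j, 0 < u j) (hdd : ∀ i, 0 < dd i)
    (A : Matrix (Fin n) (Fin n) ℝ)
    (hA : A = (List.ofFn fun j : Fin (n - 1) => Lmat n (n - j.val) (ℓ j)).prod *
        Matrix.diagonal dd *
        (List.ofFn fun j : Fin (n - 1) => Umat n (j.val + 2) (u j)).prod) :
    TotallyNonneg A ∧ (∃ k : ℕ, 0 < k ∧ TotallyPos (A ^ k)) ∧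
    IsLeast {r : ℕ | 0 < r ∧ TotallyPos (A ^ r)} (n - 1) := by
  rw [U_eq] at hA
  change A = LL n ℓ * Matrix.diagonal dd * _ at hA
  have hv : ∀ j : Fin (n - 1), 0 < (fun j : Fin (n - 1) => u j.rev) j := fun j => hu _
  have htp := tp_pow hℓ hv hdd
  obtain ⟨B, b1, b2⟩ := exists_inv hℓ hv hdd
  rw [← hA] at htp b1
  refine ⟨?_, ⟨n - 1, by omega, htp⟩, ⟨by omega, htp⟩, fun r hr => not_tp hn b1 b2 r hr.2⟩
  rw [hA]
  exact tn_mul (tn_mul (tn_LL ℓ hℓ) (tn_diag hdd)) (tn_transpose (tn_LL _ hv))
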